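/- The objective of problem P₂, namely p ↦ (1 − K/T) Σ_{k=1}^K log₂(1 + f_k(p)), is continuous on the compact interval [0, P/(T − K)] and therefore attains a global maximum at some p* ∈ [0, P/(T − K)]; consequently problem P₁ also admits a global maximizer, which can be taken of the form (τ, p_p, p_u) = (K, (P − (T − K)p*)/K, p*). -/

import Mathlib

open Finset

/-- Sum spectral efficiency `S(τ, p_p, p_u)` for `K` terminals with constants `a b c d`. -/
noncomputable def sumSE (T K : ℕ) (a b c d : Fin K → ℝ) (τ pp pu : ℝ) : ℝ :=
  (1 - τ / T) * ∑ k : Fin K, Real.logb 2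
    (1 + a k * τ * pp * pu / (b k * τ * pp * pu + c k * pu + d k * τ * pp + 1))

/-- Feasibility for problem `P₁`. -/
def FeasibleP1 (T K : ℕ) (P : ℝ) (τ : ℕ) (pp pu : ℝ) : Prop :=
  K ≤ τ ∧ τ ≤ T ∧ 0 ≤ pp ∧ 0 ≤ pu ∧ (τ : ℝ) * pp + ((T : ℝ) - τ) * pu = P

/-- Objective of problem `P₂`. -/
noncomputable def objP2 (T K : ℕ) (P : ℝ) (a b c d : Fin K → ℝ) (p : ℝ) : ℝ :=
  (1 - (K : ℝ) / T) * ∑ k : Fin K, Real.logb 2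
    (1 + a k * (P - ((T : ℝ) - K) * p) * p /
      (b k * (P - ((T : ℝ) - K) * p) * p + c k * p +
        d k * (P - ((T : ℝ) - K) * p) + 1))

/-!
At a feasible point of `P₁` the rates depend only on the pilot energy `e = τ * pp` and on the data
power `pu`. Hold `e` fixed, shorten the pilot phase to the minimal length `K`, and spread the
remaining energy `(T - τ) * pu` over all `T - K` data slots: the data power drops by the factor
`s = (T - τ) / (T - K) ≤ 1`, while `1 - τ / T` becomes `1 - K / T`, and
`(1 - K / T) * s = 1 - τ / T`. Scaling the data power by `s` scales each SINR by a factor of at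
least `s`, hence, by Bernoulli's inequality, each rate as well. So `P₁` is bounded by
`P₂`, whose maximum exists by compactness.
-/

/-- Signal-to-interference-plus-noise ratio of a terminal with constants `a b c d`, as a function of
the pilot energy `e` (the product `τ * pp` of problem `P₁`) and the data power `p`. -/
noncomputable def sinr (a b c d e p : ℝ) : ℝ :=
  a * e * p / (b * e * p + c * p + d * e + 1)

/-- Sum over all terminals of the achievable rates `log₂ (1 + SINR)`, without the factor for the
fraction of slots that carry data. -/
noncomputable def sumRate {ι : Type*} [Fintype ι] (a b c d : ι → ℝ) (e p : ℝ) : ℝ :=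
  ∑ k, Real.logb 2 (1 + sinr (a k) (b k) (c k) (d k) e p)

/-- Feasibility for the relaxation of problem `P₁` in which the pilot length `τ` may be any real
number in `[K, T]`. -/
def RelaxedFeasibleP1 (T K : ℕ) (P τ pp pu : ℝ) : Prop :=
  K ≤ τ ∧ τ ≤ T ∧ 0 ≤ pp ∧ 0 ≤ pu ∧ τ * pp + (T - τ) * pu = P

lemma FeasibleP1.relaxed {T K τ : ℕ} {P pp pu : ℝ} (h : FeasibleP1 T K P τ pp pu) :
    RelaxedFeasibleP1 T K P τ pp pu := by
  simpa only [FeasibleP1, RelaxedFeasibleP1, Nat.cast_le] using h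

lemma mem_Icc_zero_div_iff {𝕜 : Type*} [Field 𝕜] [LinearOrder 𝕜] [IsStrictOrderedRing 𝕜]
    {P t p : 𝕜} (ht : 0 < t) : p ∈ Set.Icc 0 (P / t) ↔ 0 ≤ p ∧ 0 ≤ P - t * p := by
  rw [Set.mem_Icc, le_div_iff₀' ht, sub_nonneg]

lemma mul_logb_one_add_le_logb_one_add_mul {β s x : ℝ} (hβ : 1 < β) (hs₀ : 0 ≤ s) (hs₁ : s ≤ 1)
    (hx : -1 < x) : s * Real.logb β (1 + x) ≤ Real.logb β (1 + s * x) := by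
  have h_pos : 0 < 1 + x := by linarith
  rw [← Real.logb_rpow_eq_mul_logb_of_pos h_pos]
  exact Real.logb_le_logb_of_le hβ (Real.rpow_pos_of_pos h_pos s)
    (rpow_one_add_le_one_add_mul_self hx.le hs₀ hs₁)

section sinr

variable {a b c d e p : ℝ}

lemma sinr_denom_pos (hb : 0 ≤ b) (hc : 0 ≤ c) (hd : 0 ≤ d) (he : 0 ≤ e) (hp : 0 ≤ p) :
    0 < b * e * p + c * p + d * e + 1 := by
  positivity

lemma sinr_nonneg (ha : 0 ≤ a) (hb : 0 ≤ b) (hc : 0 ≤ c) (hd : 0 ≤ d) (he : 0 ≤ e) (hp : 0 ≤ p) :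
    0 ≤ sinr a b c d e p :=
  div_nonneg (by positivity) (sinr_denom_pos hb hc hd he hp).le

lemma mul_sinr_le_sinr_mul {s : ℝ} (ha : 0 ≤ a) (hb : 0 ≤ b) (hc : 0 ≤ c) (hd : 0 ≤ d) (he : 0 ≤ e)
    (hp : 0 ≤ p) (hs₀ : 0 ≤ s) (hs₁ : s ≤ 1) : s * sinr a b c d e p ≤ sinr a b c d e (s * p) := by
  have hsp : s * p ≤ p := mul_le_of_le_one_left hp hs₁
  calc s * sinr a b c d e p = a * e * (s * p) / (b * e * p + c * p + d * e + 1) := by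
        unfold sinr; ring
    _ ≤ sinr a b c d e (s * p) := by unfold sinr; gcongr

lemma continuousOn_sinr (hb : 0 ≤ b) (hc : 0 ≤ c) (hd : 0 ≤ d) :
    ContinuousOn (fun x : ℝ × ℝ ↦ sinr a b c d x.1 x.2) (Set.Ici 0) :=
  ContinuousOn.div (by fun_prop) (by fun_prop) fun _ hx ↦ (sinr_denom_pos hb hc hd hx.1 hx.2).ne'

end sinr

section sumRate

variable {ι : Type*} [Fintype ι] {a b c d : ι → ℝ}

lemma mul_sumRate_le_sumRate_mul {e p s : ℝ} (ha : ∀ k, 0 ≤ a k) (hb : ∀ k, 0 ≤ b k)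
    (hc : ∀ k, 0 ≤ c k) (hd : ∀ k, 0 ≤ d k) (he : 0 ≤ e) (hp : 0 ≤ p) (hs₀ : 0 ≤ s) (hs₁ : s ≤ 1) :
    s * sumRate a b c d e p ≤ sumRate a b c d e (s * p) := by
  unfold sumRate
  rw [mul_sum]
  refine sum_le_sum fun k _ ↦ ?_
  have h_nonneg := sinr_nonneg (ha k) (hb k) (hc k) (hd k) he hp
  calc s * Real.logb 2 (1 + sinr (a k) (b k) (c k) (d k) e p)
      ≤ Real.logb 2 (1 + s * sinr (a k) (b k) (c k) (d k) e p) :=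
        mul_logb_one_add_le_logb_one_add_mul one_lt_two hs₀ hs₁ (by linarith)
    _ ≤ Real.logb 2 (1 + sinr (a k) (b k) (c k) (d k) e (s * p)) :=
        Real.logb_le_logb_of_le one_lt_two (by positivity) <| by
          gcongr
          exact mul_sinr_le_sinr_mul (ha k) (hb k) (hc k) (hd k) he hp hs₀ hs₁

lemma continuousOn_sumRate (ha : ∀ k, 0 ≤ a k) (hb : ∀ k, 0 ≤ b k) (hc : ∀ k, 0 ≤ c k)
    (hd : ∀ k, 0 ≤ d k) :
    ContinuousOn (fun x : ℝ × ℝ ↦ sumRate a b c d x.1 x.2) (Set.Ici 0) := by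
  refine continuousOn_finsetSum _ fun k _ ↦
    (continuousOn_const.add (continuousOn_sinr (hb k) (hc k) (hd k))).logb fun x hx ↦ ?_
  exact (add_pos_of_pos_of_nonneg one_pos
    (sinr_nonneg (ha k) (hb k) (hc k) (hd k) hx.1 hx.2)).ne'

end sumRate

section powerAllocation

variable {T K : ℕ} {P : ℝ} {a b c d : Fin K → ℝ}

lemma sumSE_eq_mul_sumRate (τ pp pu : ℝ) :
    sumSE T K a b c d τ pp pu = (1 - τ / T) * sumRate a b c d (τ * pp) pu := by
  simp only [sumSE, sumRate, sinr, mul_assoc]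

lemma objP2_eq_mul_sumRate (p : ℝ) :
    objP2 T K P a b c d p = (1 - (K : ℝ) / T) * sumRate a b c d (P - ((T : ℝ) - K) * p) p :=
  rfl

lemma sumSE_minimal_pilot_eq_objP2 (hK : 0 < K) (p : ℝ) :
    sumSE T K a b c d K ((P - ((T : ℝ) - K) * p) / K) p = objP2 T K P a b c d p := by
  rw [sumSE_eq_mul_sumRate, objP2_eq_mul_sumRate, mul_div_cancel₀ _ (by positivity)]

lemma feasibleP1_minimal_pilot {p : ℝ} (hK : 0 < K) (hKT : K < T)
    (hp : p ∈ Set.Icc 0 (P / ((T : ℝ) - K))) :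
    FeasibleP1 T K P K ((P - ((T : ℝ) - K) * p) / K) p := by
  obtain ⟨hp₀, he⟩ := (mem_Icc_zero_div_iff (sub_pos.2 (Nat.cast_lt.2 hKT))).1 hp
  refine ⟨le_rfl, hKT.le, by positivity, hp₀, ?_⟩
  rw [mul_div_cancel₀ _ (by positivity), sub_add_cancel]

lemma continuousOn_objP2 (hKT : K < T) (ha : ∀ k, 0 ≤ a k) (hb : ∀ k, 0 ≤ b k)
    (hc : ∀ k, 0 ≤ c k) (hd : ∀ k, 0 ≤ d k) :
    ContinuousOn (objP2 T K P a b c d) (Set.Icc 0 (P / ((T : ℝ) - K))) := by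
  have h_cont : ContinuousOn (fun p ↦ sumRate a b c d (P - ((T : ℝ) - K) * p) p)
      (Set.Icc 0 (P / ((T : ℝ) - K))) := by
    refine (continuousOn_sumRate ha hb hc hd).comp
      (f := fun p ↦ (P - ((T : ℝ) - K) * p, p)) (by fun_prop) fun p hp ↦ ?_
    exact ((mem_Icc_zero_div_iff (sub_pos.2 (Nat.cast_lt.2 hKT))).1 hp).symm
  exact continuousOn_const.mul h_cont

lemma RelaxedFeasibleP1.exists_sumSE_le_objP2 {τ pp pu : ℝ}
    (h : RelaxedFeasibleP1 T K P τ pp pu) (hKT : K < T) (ha : ∀ k, 0 ≤ a k) (hb : ∀ k, 0 ≤ b k)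
    (hc : ∀ k, 0 ≤ c k) (hd : ∀ k, 0 ≤ d k) :
    ∃ p ∈ Set.Icc 0 (P / ((T : ℝ) - K)), sumSE T K a b c d τ pp pu ≤ objP2 T K P a b c d p := by
  obtain ⟨hKτ, hτT, hpp, hpu, h_energy⟩ := h
  have hTK : 0 < (T : ℝ) - K := sub_pos.2 (Nat.cast_lt.2 hKT)
  have hT : 0 < (T : ℝ) := Nat.cast_pos.2 (Nat.zero_lt_of_lt hKT)
  have he : 0 ≤ τ * pp := mul_nonneg (K.cast_nonneg.trans hKτ) hpp
  let s := (T - τ) / (T - K)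
  have hs₀ : 0 ≤ s := div_nonneg (sub_nonneg.2 hτT) hTK.le
  have hs₁ : s ≤ 1 := (div_le_one hTK).2 (by linarith)
  have hs_mul : (T - K) * s = T - τ := mul_div_cancel₀ _ hTK.ne'
  have h_pilot : P - (T - K) * (s * pu) = τ * pp := by linear_combination -h_energy - pu * hs_mul
  have h_prefactor : 1 - τ / T = (1 - K / T) * s := by
    field_simp
    exact hs_mul.symm
  have hK_prefactor : 0 ≤ 1 - (K : ℝ) / T :=
    sub_nonneg.2 (div_le_one_of_le₀ (Nat.cast_le.2 hKT.le) hT.le)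
  refine ⟨s * pu, (mem_Icc_zero_div_iff hTK).2 ⟨mul_nonneg hs₀ hpu, h_pilot ▸ he⟩, ?_⟩
  calc sumSE T K a b c d τ pp pu
      = (1 - K / T) * (s * sumRate a b c d (τ * pp) pu) := by
        rw [sumSE_eq_mul_sumRate, h_prefactor, mul_assoc]
    _ ≤ (1 - K / T) * sumRate a b c d (τ * pp) (s * pu) := by
        gcongr
        exact mul_sumRate_le_sumRate_mul ha hb hc hd he hpu hs₀ hs₁
    _ = objP2 T K P a b c d (s * pu) := by rw [objP2_eq_mul_sumRate, h_pilot]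

end powerAllocation

theorem stmt_13_general (T K : ℕ) (hK : 0 < K) (hKT : K < T) (P : ℝ) (hP : 0 ≤ P)
    (a b c d : Fin K → ℝ) (ha : ∀ k, 0 ≤ a k) (hb : ∀ k, 0 ≤ b k)
    (hc : ∀ k, 0 ≤ c k) (hd : ∀ k, 0 ≤ d k) :
    ContinuousOn (objP2 T K P a b c d) (Set.Icc (0 : ℝ) (P / ((T : ℝ) - K))) ∧
    ∃ pstar ∈ Set.Icc (0 : ℝ) (P / ((T : ℝ) - K)),
      (∀ p ∈ Set.Icc (0 : ℝ) (P / ((T : ℝ) - K)),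
        objP2 T K P a b c d p ≤ objP2 T K P a b c d pstar) ∧
      FeasibleP1 T K P K ((P - ((T : ℝ) - K) * pstar) / K) pstar ∧
      (∀ τ pp pu : ℝ, RelaxedFeasibleP1 T K P τ pp pu →
        sumSE T K a b c d τ pp pu ≤
          sumSE T K a b c d K ((P - ((T : ℝ) - K) * pstar) / K) pstar) := by
  have hcont : ContinuousOn (objP2 T K P a b c d) (Set.Icc 0 (P / ((T : ℝ) - K))) :=
    continuousOn_objP2 hKT ha hb hc hd
  have h_nonempty : (Set.Icc 0 (P / ((T : ℝ) - K))).Nonempty :=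
    Set.nonempty_Icc.2 (div_nonneg hP (sub_nonneg.2 (Nat.cast_le.2 hKT.le)))
  obtain ⟨pstar, hpstar, hmax⟩ := isCompact_Icc.exists_isMaxOn h_nonempty hcont
  refine ⟨hcont, pstar, hpstar, fun _ hp ↦ hmax hp, feasibleP1_minimal_pilot hK hKT hpstar, ?_⟩
  intro τ pp pu h
  obtain ⟨p, hp, hle⟩ := h.exists_sumSE_le_objP2 hKT ha hb hc hd
  rw [sumSE_minimal_pilot_eq_objP2 hK]
  exact hle.trans (hmax hp)

theorem stmt_13 (T K : ℕ) (hK : 0 < K) (hKT : K < T) (P : ℝ) (hP : 0 < P)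
    (a b c d : Fin K → ℝ) (ha : ∀ k, 0 < a k) (hb : ∀ k, 0 ≤ b k)
    (hc : ∀ k, 0 ≤ c k) (hd : ∀ k, 0 ≤ d k) :
    ContinuousOn (objP2 T K P a b c d) (Set.Icc (0 : ℝ) (P / ((T : ℝ) - K))) ∧
    ∃ pstar ∈ Set.Icc (0 : ℝ) (P / ((T : ℝ) - K)),
      (∀ p ∈ Set.Icc (0 : ℝ) (P / ((T : ℝ) - K)),
        objP2 T K P a b c d p ≤ objP2 T K P a b c d pstar) ∧
      FeasibleP1 T K P K ((P - ((T : ℝ) - K) * pstar) / K) pstar ∧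
      (∀ (τ : ℕ) (pp pu : ℝ), FeasibleP1 T K P τ pp pu →
        sumSE T K a b c d τ pp pu ≤
          sumSE T K a b c d K ((P - ((T : ℝ) - K) * pstar) / K) pstar) := by
  obtain ⟨hcont, pstar, hpstar, hmax, hfeas, hopt⟩ :=
    stmt_13_general T K hK hKT P hP.le a b c d (fun k ↦ (ha k).le) hb hc hd
  exact ⟨hcont, pstar, hpstar, hmax, hfeas, fun τ pp pu h ↦ hopt τ pp pu h.relaxed⟩
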